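/- Let A be a timed automaton and let {G(q)}_{q ∈ Q} be the least solution of the state-based guard equations. Then the relation ≼^LU_A on configurations of A, defined by (q, v) ≼^LU_A (q, v') iff v ⊑^LU_{G(q)} v', is a simulation on the configurations of A. -/

import Mathlib

open scoped NNReal

/-! ## Atomic constraints over a set of clocks -/

/-- Comparison operator `◁ ∈ {<, ≤}`. -/
inductive Ineq : Type where
  | lt : Ineq
  | le : Ineq
deriving DecidableEq

/-- Interpretation of a comparison operator on reals. -/
def Ineq.holds : Ineq → ℝ → ℝ → Prop
  | .lt, a, b => a < b
  | .le, a, b => a ≤ b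

/-- Atomic constraints over clocks `X`:
`upper x o c` is `x ◁ c` (c ∈ ℕ), `lower c o x` is `c ◁ x` (c ∈ ℕ),
`diag x y o d` is `x - y ◁ d` (d ∈ ℤ). -/
inductive Constr (X : Type) : Type where
  | upper : X → Ineq → ℕ → Constr X
  | lower : ℕ → Ineq → X → Constr X
  | diag : X → X → Ineq → ℤ → Constr X
deriving DecidableEq

namespace Constr

/-- Is the constraint a diagonal constraint `x - y ◁ d`? -/
def isDiag {X : Type} : Constr X → Bool
  | .diag _ _ _ _ => true
  | _ => false

/-- The integer constant of a constraint. -/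
def constOf {X : Type} : Constr X → ℤ
  | .upper _ _ c => (c : ℤ)
  | .lower c _ _ => (c : ℤ)
  | .diag _ _ _ d => d

/-- Satisfaction of a constraint by a clock valuation `v : X → ℝ≥0`. -/
def sat {X : Type} (v : X → ℝ≥0) : Constr X → Prop
  | .upper x o c => o.holds (v x : ℝ) (c : ℝ)
  | .lower c o x => o.holds (c : ℝ) (v x : ℝ)
  | .diag x y o d => o.holds ((v x : ℝ) - (v y : ℝ)) (d : ℝ)

end Constr

/-- Time elapse: `v + δ`. -/
def shift {X : Type} (v : X → ℝ≥0) (δ : ℝ≥0) : X → ℝ≥0 := fun x => v x + δ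

/-- The relation `v ⊑_G v'`: for all `φ ∈ G` and all delays `δ ≥ 0`,
`v + δ ⊨ φ` implies `v' + δ ⊨ φ`. -/
def simG {X : Type} (G : Set (Constr X)) (v v' : X → ℝ≥0) : Prop :=
  ∀ φ ∈ G, ∀ δ : ℝ≥0, Constr.sat (shift v δ) φ → Constr.sat (shift v' δ) φ

/-- `Z ⊑_G Z'` on sets of valuations. -/
def simGZ {X : Type} (G : Set (Constr X)) (Z Z' : Set (X → ℝ≥0)) : Prop :=
  ∀ v ∈ Z, ∃ v' ∈ Z', simG G v v'

open Classical in
/-- `[R]v`: reset the clocks in `R` to `0`. -/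
noncomputable def reset {X : Type} (R : Set X) (v : X → ℝ≥0) : X → ℝ≥0 :=
  fun x => if x ∈ R then 0 else v x

/-- Weakest precondition `wp(⊑_φ, R)` of a single constraint over a reset. -/
def wpReset {X : Type} (R : Set X) : Constr X → Set (Constr X)
  | .upper x o c => {ψ | x ∉ R ∧ ψ = .upper x o c}
  | .lower c o x => {ψ | x ∉ R ∧ ψ = .lower c o x}
  | .diag x y o d =>
      {ψ | (x ∉ R ∧ y ∉ R ∧ ψ = .diag x y o d) ∨
           (x ∉ R ∧ y ∈ R ∧ 0 ≤ d ∧ ψ = .upper x o d.toNat) ∨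
           (x ∈ R ∧ y ∉ R ∧ 0 ≤ -d ∧ ψ = .lower (-d).toNat o y)}

/-- Weakest precondition `wp(⊑_G, R)` of a set of constraints over a reset. -/
def wpResetSet {X : Type} (R : Set X) (G : Set (Constr X)) : Set (Constr X) :=
  ⋃ φ ∈ G, wpReset R φ

/-! ## Timed automata -/

/-- A transition: source state, guard (finite conjunction of constraints),
reset set, target state. -/
abbrev TTrans (Q X : Type) : Type := Q × Finset (Constr X) × Set X × Q

def TTrans.src {Q X : Type} (t : TTrans Q X) : Q := t.1
def TTrans.grd {Q X : Type} (t : TTrans Q X) : Finset (Constr X) := t.2.1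
def TTrans.rst {Q X : Type} (t : TTrans Q X) : Set X := t.2.2.1
def TTrans.tgt {Q X : Type} (t : TTrans Q X) : Q := t.2.2.2

/-- A timed automaton. -/
structure TA (Q X : Type) : Type where
  init : Q
  trans : Finset (TTrans Q X)
  acc : Set Q

/-- Action step of a timed automaton along transition `t`. -/
def Step {Q X : Type} (A : TA Q X) (t : TTrans Q X) (c c' : Q × (X → ℝ≥0)) : Prop :=
  t ∈ A.trans ∧ TTrans.src t = c.1 ∧ (∀ φ ∈ TTrans.grd t, Constr.sat c.2 φ) ∧
    c'.1 = TTrans.tgt t ∧ c'.2 = reset (TTrans.rst t) c.2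

/-- `r` is a simulation on the configurations of `A`: a reflexive transitive
relation, relating only configurations with equal states, compatible with
delays and action transitions. -/
def IsSimulation {Q X : Type} (A : TA Q X)
    (r : (Q × (X → ℝ≥0)) → (Q × (X → ℝ≥0)) → Prop) : Prop :=
  Reflexive r ∧ Transitive r ∧
  ∀ q v q' v', r (q, v) (q', v') →
    q = q' ∧
    (∀ δ : ℝ≥0, ∃ δ' : ℝ≥0, r (q, shift v δ) (q, shift v' δ')) ∧
    (∀ t c₁, Step A t (q, v) c₁ →
      ∃ v₁', Step A t (q, v') (c₁.1, v₁') ∧ r c₁ (c₁.1, v₁'))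

/-- The state-based guard equations:
`G(q) = ⋃_{(q,g,R,q₁) ∈ T} ({g} ∪ wp(⊑_{G(q₁)}, R))`. -/
def GuardEq {Q X : Type} (A : TA Q X) (G : Q → Set (Constr X)) : Prop :=
  ∀ q, G q = ⋃ t ∈ A.trans, ⋃ (_ : TTrans.src t = q),
    ((TTrans.grd t : Set (Constr X)) ∪ wpResetSet (TTrans.rst t) (G (TTrans.tgt t)))

/-! ## LU bounds -/

def lowerConstAt {X : Type} [DecidableEq X] (x : X) : Constr X → WithBot ℕ
  | .lower c _ y => if y = x then (c : WithBot ℕ) else ⊥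
  | _ => ⊥

def upperConstAt {X : Type} [DecidableEq X] (x : X) : Constr X → WithBot ℕ
  | .upper y _ c => if y = x then (c : WithBot ℕ) else ⊥
  | _ => ⊥

/-- `L_G(x)`: maximum constant among lower-bound constraints `c ◁ x` in `G`
(`⊥ = -∞` if none). -/
def Lbound {X : Type} [DecidableEq X] (G : Finset (Constr X)) (x : X) : WithBot ℕ :=
  G.sup (lowerConstAt x)

/-- `U_G(x)`: maximum constant among upper-bound constraints `x ◁ c` in `G`
(`⊥ = -∞` if none). -/
def Ubound {X : Type} [DecidableEq X] (G : Finset (Constr X)) (x : X) : WithBot ℕ :=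
  G.sup (upperConstAt x)

/-- The LU simulation `v ≼_LU v'` for bounds functions `L U : X → ℕ ∪ {-∞}`. -/
def luSim {X : Type} (L U : X → WithBot ℕ) (v v' : X → ℝ≥0) : Prop :=
  ∀ x : X,
    (v' x < v x → (L x).map (fun c : ℕ => (c : ℝ)) < ((v' x : ℝ) : WithBot ℝ)) ∧
    (v x < v' x → (U x).map (fun c : ℕ => (c : ℝ)) < ((v x : ℝ) : WithBot ℝ))

/-- The relation `v ⊑^LU_G v'`: `v ≼_{LU(G)} v'` and every diagonal constraint
of `G` satisfied by `v` is satisfied by `v'`. -/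
def luglu {X : Type} [DecidableEq X] (G : Finset (Constr X)) (v v' : X → ℝ≥0) : Prop :=
  luSim (Lbound G) (Ubound G) v v' ∧
    ∀ φ ∈ G, φ.isDiag → Constr.sat v φ → Constr.sat v' φ

/-- Lifting a relation on valuations to sets of valuations. -/
def zoneRel {X : Type} (r : (X → ℝ≥0) → (X → ℝ≥0) → Prop) (Z Z' : Set (X → ℝ≥0)) : Prop :=
  ∀ v ∈ Z, ∃ v' ∈ Z', r v v'

/-! ## Runs of timed automata -/

/-- `stepsFrom A c l`: the alternating delay-action sequence `l` is a valid
sequence of steps of `A` starting at configuration `c`. -/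
def stepsFrom {Q X : Type} (A : TA Q X) :
    (Q × (X → ℝ≥0)) → List (ℝ≥0 × TTrans Q X) → Prop
  | _, [] => True
  | c, (δ, t) :: l =>
      t ∈ A.trans ∧ TTrans.src t = c.1 ∧
      (∀ φ ∈ TTrans.grd t, Constr.sat (shift c.2 δ) φ) ∧
      stepsFrom A (TTrans.tgt t, reset (TTrans.rst t) (shift c.2 δ)) l

/-- Configuration reached after a sequence of delay-action steps. -/
noncomputable def endConfig {Q X : Type} :
    (Q × (X → ℝ≥0)) → List (ℝ≥0 × TTrans Q X) → (Q × (X → ℝ≥0))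
  | c, [] => c
  | c, (δ, t) :: l => endConfig (TTrans.tgt t, reset (TTrans.rst t) (shift c.2 δ)) l

/-- A run of `A`: a valid sequence of delay-action steps from `(q₀, 0̄)`. -/
def TA.Run {Q X : Type} (A : TA Q X) : Type :=
  {l : List (ℝ≥0 × TTrans Q X) // stepsFrom A (A.init, fun _ => 0) l}

/-- A run is accepting if it ends in an accepting state. -/
def TA.Accepting {Q X : Type} (A : TA Q X) (r : A.Run) : Prop :=
  (endConfig (A.init, fun _ => 0) r.val).1 ∈ A.acc

/-- `A` is diagonal-free: no guard contains a diagonal constraint. -/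
def DiagFree {Q X : Type} (A : TA Q X) : Prop :=
  ∀ t ∈ A.trans, ∀ φ ∈ TTrans.grd t, ¬ φ.isDiag

/-- The (finite) set of diagonal constraints occurring in guards of `A`. -/
def diagGuards {Q X : Type} [DecidableEq X] (A : TA Q X) : Finset (Constr X) :=
  A.trans.biUnion fun t => (TTrans.grd t).filter fun φ => φ.isDiag

/-! ## Updateable timed automata -/

/-- Atomic update of a clock: `x := c` or `x := y + d`. -/
inductive AtomicUp (X : Type) : Type where
  | const : ℕ → AtomicUp X
  | add : X → ℤ → AtomicUp X
deriving DecidableEq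

/-- `up(v) : X → ℝ` (may be negative). -/
def applyUpd {X : Type} (up : X → AtomicUp X) (v : X → ℝ≥0) : X → ℝ :=
  fun x => match up x with
    | .const c => (c : ℝ)
    | .add y d => (v y : ℝ) + (d : ℝ)

/-- Weakest precondition `wp(⊑_φ, up)` of a single constraint over an update. -/
def wpUpd {X : Type} [DecidableEq X] (up : X → AtomicUp X) : Constr X → Set (Constr X)
  | .upper x o c =>
      match up x with
      | .const _ => ∅
      | .add y d => if 0 ≤ (c : ℤ) - d then {Constr.upper y o ((c : ℤ) - d).toNat} else ∅
  | .lower c o x =>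
      match up x with
      | .const _ => ∅
      | .add y d => if 0 ≤ (c : ℤ) - d then {Constr.lower ((c : ℤ) - d).toNat o y} else ∅
  | .diag x y o c =>
      match up x, up y with
      | .const _, .const _ => ∅
      | .add y₁ d₁, .const c₂ =>
          if 0 ≤ c + (c₂ : ℤ) - d₁ then {Constr.upper y₁ o (c + (c₂ : ℤ) - d₁).toNat} else ∅
      | .const c₁, .add y₂ d₂ =>
          if 0 ≤ (c₁ : ℤ) - d₂ - c then {Constr.lower ((c₁ : ℤ) - d₂ - c).toNat o y₂} else ∅
      | .add y₁ d₁, .add y₂ d₂ =>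
          if y₁ = y₂ then ∅ else {Constr.diag y₁ y₂ o (c - d₁ + d₂)}

/-- Weakest precondition `wp(⊑_G, up)` of a set of constraints over an update. -/
def wpUpdSet {X : Type} [DecidableEq X] (up : X → AtomicUp X) (G : Set (Constr X)) :
    Set (Constr X) :=
  ⋃ φ ∈ G, wpUpd up φ

/-- The set of constraints `{0 ≤ x | x ∈ X}`. -/
def nonnegConstrs (X : Type) : Set (Constr X) := {φ | ∃ x : X, φ = Constr.lower 0 Ineq.le x}

/-- A transition of an updateable timed automaton: source, guard, update, target. -/
abbrev UTrans (Q X : Type) : Type := Q × Finset (Constr X) × (X → AtomicUp X) × Q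

def UTrans.src {Q X : Type} (t : UTrans Q X) : Q := t.1
def UTrans.grd {Q X : Type} (t : UTrans Q X) : Finset (Constr X) := t.2.1
def UTrans.upd {Q X : Type} (t : UTrans Q X) : X → AtomicUp X := t.2.2.1
def UTrans.tgt {Q X : Type} (t : UTrans Q X) : Q := t.2.2.2

/-- An updateable timed automaton. -/
structure UTA (Q X : Type) : Type where
  init : Q
  trans : Finset (UTrans Q X)
  acc : Set Q

/-- Action step of an updateable timed automaton along transition `t`:
the guard holds, `up(v) ≥ 0`, and the new valuation is `up(v)`. -/
def UStep {Q X : Type} (A : UTA Q X) (t : UTrans Q X) (c c' : Q × (X → ℝ≥0)) : Prop :=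
  t ∈ A.trans ∧ UTrans.src t = c.1 ∧ (∀ φ ∈ UTrans.grd t, Constr.sat c.2 φ) ∧
    c'.1 = UTrans.tgt t ∧ ∀ x, (c'.2 x : ℝ) = applyUpd (UTrans.upd t) c.2 x

/-- `r` is a simulation on configurations of an updateable timed automaton. -/
def IsSimulationU {Q X : Type} (A : UTA Q X)
    (r : (Q × (X → ℝ≥0)) → (Q × (X → ℝ≥0)) → Prop) : Prop :=
  Reflexive r ∧ Transitive r ∧
  ∀ q v q' v', r (q, v) (q', v') →
    q = q' ∧
    (∀ δ : ℝ≥0, ∃ δ' : ℝ≥0, r (q, shift v δ) (q, shift v' δ')) ∧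
    (∀ t c₁, UStep A t (q, v) c₁ →
      ∃ v₁', UStep A t (q, v') (c₁.1, v₁') ∧ r c₁ (c₁.1, v₁'))

/-- State-based guard equations for updateable timed automata. -/
def GuardEqU {Q X : Type} [DecidableEq X] (A : UTA Q X) (G : Q → Set (Constr X)) : Prop :=
  ∀ q, G q = ⋃ t ∈ A.trans, ⋃ (_ : UTrans.src t = q),
    ((UTrans.grd t : Set (Constr X)) ∪ wpUpdSet (UTrans.upd t) (nonnegConstrs X)
      ∪ wpUpdSet (UTrans.upd t) (G (UTrans.tgt t)))

/-- Kleene iterates `G^i(q)` of the state-based guard equations. -/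
def iterG {Q X : Type} [DecidableEq X] (A : UTA Q X) : ℕ → Q → Set (Constr X)
  | 0 => fun q => ⋃ t ∈ A.trans, ⋃ (_ : UTrans.src t = q),
      ((UTrans.grd t : Set (Constr X)) ∪ wpUpdSet (UTrans.upd t) (nonnegConstrs X))
  | (i + 1) => fun q => iterG A i q ∪
      (⋃ t ∈ A.trans, ⋃ (_ : UTrans.src t = q),
        wpUpdSet (UTrans.upd t) (iterG A i (UTrans.tgt t)))

/-- `G^{i+1}(q)` is coloured red: a new diagonal constraint was added, or a new
non-diagonal constraint whose constant is strictly bigger than the constant of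
every non-diagonal constraint of the same kind on the same clock in `G^i(q)`. -/
def RedAt {Q X : Type} [DecidableEq X] (A : UTA Q X) : ℕ → Q → Prop
  | 0, _ => False
  | (i + 1), q =>
      (∃ φ : Constr X, φ ∈ iterG A (i + 1) q ∧ φ ∉ iterG A i q ∧ φ.isDiag) ∨
      (∃ (x : X) (o : Ineq) (c : ℕ),
        Constr.upper x o c ∈ iterG A (i + 1) q ∧ Constr.upper x o c ∉ iterG A i q ∧
        ∀ (o' : Ineq) (c' : ℕ), Constr.upper x o' c' ∈ iterG A i q → c' < c) ∨
      (∃ (x : X) (o : Ineq) (c : ℕ),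
        Constr.lower c o x ∈ iterG A (i + 1) q ∧ Constr.lower c o x ∉ iterG A i q ∧
        ∀ (o' : Ineq) (c' : ℕ), Constr.lower c' o' x ∈ iterG A i q → c' < c)

/-- `G^i(q)` is coloured green. -/
def GreenAt {Q X : Type} [DecidableEq X] (A : UTA Q X) (i : ℕ) (q : Q) : Prop :=
  ¬ RedAt A i q

/-- Absolute value of the constant of an atomic update. -/
def updBound {X : Type} : AtomicUp X → ℕ
  | .const c => c
  | .add _ d => d.natAbs

/-! ## The statement -/


theorem aux_map_sup {α : Type} (G : Finset α) (f : α → WithBot ℕ) (a : ℝ) :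
    (G.sup f).map (fun c : ℕ => (c : ℝ)) < (a : WithBot ℝ) ↔
      ∀ φ ∈ G, ∀ n : ℕ, f φ = (n : WithBot ℕ) → (n : ℝ) < a := by
  have key : ∀ w : WithBot ℕ, w.map (fun c : ℕ => (c : ℝ)) < (a : WithBot ℝ) ↔
      ∀ n : ℕ, w = (n : WithBot ℕ) → (n : ℝ) < a := by
    intro w
    induction w using WithBot.recBotCoe with
    | bot =>
      constructor
      · intro _ n hn
        exact absurd hn (WithBot.bot_ne_coe)
      · intro _
        exact WithBot.bot_lt_coe a
    | coe m =>
      constructor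
      · intro h n hn
        have h1 : ((m : ℝ) : WithBot ℝ) < (a : WithBot ℝ) := h
        have h2 : m = n := WithBot.coe_injective hn
        rw [← h2]
        exact WithBot.coe_lt_coe.1 h1
      · intro h
        exact WithBot.coe_lt_coe.2 (h m rfl)
  rw [key]
  constructor
  · intro h φ hφ n hn
    have h1 : (n : WithBot ℕ) ≤ G.sup f := hn ▸ Finset.le_sup hφ
    obtain ⟨m, hm, hnm⟩ := WithBot.coe_le_iff.1 h1
    have h3 : (n : ℝ) ≤ m := by exact_mod_cast hnm
    exact lt_of_le_of_lt h3 (h m hm)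
  · intro h n hn
    have hne : G.Nonempty := by
      rcases G.eq_empty_or_nonempty with h0 | h0
      · subst h0
        exact absurd hn WithBot.bot_ne_coe
      · exact h0
    obtain ⟨φ, hφ, he⟩ := Finset.exists_mem_eq_sup G hne f
    exact h φ hφ n (he ▸ hn)

theorem aux_L {X : Type} [DecidableEq X] (G : Finset (Constr X)) (x : X) (a : ℝ) :
    (Lbound G x).map (fun c : ℕ => (c : ℝ)) < (a : WithBot ℝ) ↔
      ∀ c o, Constr.lower c o x ∈ G → (c : ℝ) < a := by
  unfold Lbound
  rw [aux_map_sup]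
  constructor
  · intro h c o hm
    exact h _ hm c (by simp [lowerConstAt])
  · intro h φ hφ n hn
    cases φ with
    | lower c o y =>
      by_cases hy : y = x
      · subst hy
        have : c = n := WithBot.coe_injective (by simpa [lowerConstAt] using hn)
        exact this ▸ h c o hφ
      · simp [lowerConstAt, hy] at hn
    | upper => simp [lowerConstAt] at hn
    | diag => simp [lowerConstAt] at hn

theorem aux_U {X : Type} [DecidableEq X] (G : Finset (Constr X)) (x : X) (a : ℝ) :
    (Ubound G x).map (fun c : ℕ => (c : ℝ)) < (a : WithBot ℝ) ↔
      ∀ c o, Constr.upper x o c ∈ G → (c : ℝ) < a := by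
  unfold Ubound
  rw [aux_map_sup]
  constructor
  · intro h c o hm
    exact h _ hm c (by simp [upperConstAt])
  · intro h φ hφ n hn
    cases φ with
    | upper y o c =>
      by_cases hy : y = x
      · subst hy
        have : c = n := WithBot.coe_injective (by simpa [upperConstAt] using hn)
        exact this ▸ h c o hφ
      · simp [upperConstAt, hy] at hn
    | lower => simp [upperConstAt] at hn
    | diag => simp [upperConstAt] at hn

theorem aux_luglu {X : Type} [DecidableEq X] (G : Finset (Constr X)) (v v' : X → ℝ≥0) :
    luglu G v v' ↔
      (∀ x c o, Constr.lower c o x ∈ G → v' x < v x → (c : ℝ) < v' x) ∧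
      (∀ x c o, Constr.upper x o c ∈ G → v x < v' x → (c : ℝ) < v x) ∧
      (∀ x y o d, Constr.diag x y o d ∈ G → o.holds ((v x : ℝ) - v y) d →
        o.holds ((v' x : ℝ) - v' y) d) := by
  unfold luglu luSim
  simp only [aux_L, aux_U]
  constructor
  · rintro ⟨h1, h2⟩
    exact ⟨fun x c o hm hv => (h1 x).1 hv c o hm, fun x c o hm hv => (h1 x).2 hv c o hm,
      fun x y o d hm hs => h2 _ hm rfl hs⟩
  · rintro ⟨h1, h2, h3⟩
    refine ⟨fun x => ⟨fun hv c o hm => h1 x c o hm hv, fun hv c o hm => h2 x c o hm hv⟩, ?_⟩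
    intro φ hφ hd hs
    cases φ with
    | upper => simp [Constr.isDiag] at hd
    | lower => simp [Constr.isDiag] at hd
    | diag x y o d => exact h3 x y o d hφ hs

theorem aux_sat {X : Type} [DecidableEq X] (G : Finset (Constr X)) (v v' : X → ℝ≥0)
    (h : luglu G v v') (φ : Constr X) (hφ : φ ∈ G) (hs : Constr.sat v φ) :
    Constr.sat v' φ := by
  rw [aux_luglu] at h
  obtain ⟨h1, h2, h3⟩ := h
  cases φ with
  | upper x o c =>
    rcases lt_or_ge (v x) (v' x) with hv | hv
    · have := h2 x c o hφ hv
      cases o <;> simp only [Constr.sat, Ineq.holds] at hs <;> linarith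
    · have hv : (v' x : ℝ) ≤ v x := hv
      cases o <;> simp only [Constr.sat, Ineq.holds] at hs ⊢ <;> linarith
  | lower c o x =>
    rcases lt_or_ge (v' x) (v x) with hv | hv
    · have := h1 x c o hφ hv
      cases o <;> simp only [Constr.sat, Ineq.holds] at hs ⊢ <;> linarith
    · have hv : (v x : ℝ) ≤ v' x := hv
      cases o <;> simp only [Constr.sat, Ineq.holds] at hs ⊢ <;> linarith
  | diag x y o d => exact h3 x y o d hφ hs

theorem aux_reset {X : Type} [DecidableEq X] (G G₁ : Finset (Constr X)) (R : Set X)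
    (hG : wpResetSet R (G₁ : Set (Constr X)) ⊆ G) (v v' : X → ℝ≥0)
    (h : luglu G v v') : luglu G₁ (reset R v) (reset R v') := by
  have hmem : ∀ φ ∈ G₁, ∀ ψ ∈ wpReset R φ, ψ ∈ G := by
    intro φ hφ ψ hψ
    apply hG
    simp only [wpResetSet, Set.mem_iUnion]
    exact ⟨φ, hφ, hψ⟩
  have hsat := aux_sat G v v' h
  rw [aux_luglu] at h ⊢
  obtain ⟨h1, h2, h3⟩ := h
  refine ⟨?_, ?_, ?_⟩
  · intro x c o hm hv
    by_cases hx : x ∈ R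
    · simp [reset, hx] at hv
    · simp only [reset, hx, if_false] at hv ⊢
      exact h1 x c o (hmem _ hm _ ⟨hx, rfl⟩) hv
  · intro x c o hm hv
    by_cases hx : x ∈ R
    · simp [reset, hx] at hv
    · simp only [reset, hx, if_false] at hv ⊢
      exact h2 x c o (hmem _ hm _ ⟨hx, rfl⟩) hv
  · intro x y o d hm hs
    by_cases hx : x ∈ R <;> by_cases hy : y ∈ R <;>
      simp only [reset, hx, hy, if_true, if_false] at hs ⊢
    · exact hs
    · have hp := (v' y).coe_nonneg
      by_cases hd : 0 ≤ -d
      · have hc : (((-d).toNat : ℕ) : ℝ) = -(d : ℝ) := by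
          have : (((-d).toNat : ℕ) : ℤ) = -d := Int.toNat_of_nonneg hd
          exact_mod_cast this
        have := hsat _ (hmem _ hm (.lower (-d).toNat o y) (Or.inr (Or.inr ⟨hx, hy, hd, rfl⟩)))
        cases o <;> simp only [Constr.sat, Ineq.holds, hc, NNReal.coe_zero] at this hs ⊢
        · have := this (by linarith)
          linarith
        · have := this (by linarith)
          linarith
      · have hd' : (0 : ℝ) < d := by
          have : 0 < d := by omega
          exact_mod_cast this
        cases o <;> simp only [Ineq.holds, NNReal.coe_zero] <;> linarith
    · have hp := (v x).coe_nonneg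
      by_cases hd : 0 ≤ d
      · have hc : ((d.toNat : ℕ) : ℝ) = (d : ℝ) := by
          have : ((d.toNat : ℕ) : ℤ) = d := Int.toNat_of_nonneg hd
          exact_mod_cast this
        have := hsat _ (hmem _ hm (.upper x o d.toNat) (Or.inr (Or.inl ⟨hx, hy, hd, rfl⟩)))
        cases o <;> simp only [Constr.sat, Ineq.holds, hc, NNReal.coe_zero] at this hs ⊢
        · have := this (by linarith)
          linarith
        · have := this (by linarith)
          linarith
      · have hd' : (d : ℝ) < 0 := by
          have : d < 0 := by omega
          exact_mod_cast this
        cases o <;> simp only [Ineq.holds, NNReal.coe_zero] at hs <;> linarith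
    · exact h3 x y o d (hmem _ hm _ (Or.inl ⟨hx, hy, rfl⟩)) hs

theorem aux_trans {X : Type} [DecidableEq X] (G : Finset (Constr X)) (a b c : X → ℝ≥0)
    (h : luglu G a b) (h' : luglu G b c) : luglu G a c := by
  rw [aux_luglu] at h h' ⊢
  obtain ⟨h1, h2, h3⟩ := h
  obtain ⟨k1, k2, k3⟩ := h'
  refine ⟨?_, ?_, fun x y o d hm hs => k3 x y o d hm (h3 x y o d hm hs)⟩
  · intro x n o hm hv
    rcases lt_or_ge (c x) (b x) with hb | hb
    · exact k1 x n o hm hb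
    · exact lt_of_lt_of_le (h1 x n o hm (lt_of_le_of_lt hb hv)) (NNReal.coe_le_coe.2 hb)
  · intro x n o hm hv
    rcases lt_or_ge (a x) (b x) with hb | hb
    · exact h2 x n o hm hb
    · exact lt_of_lt_of_le (k2 x n o hm (lt_of_le_of_lt hb hv)) (NNReal.coe_le_coe.2 hb)

theorem aux_shift {X : Type} [DecidableEq X] (G : Finset (Constr X)) (v v' : X → ℝ≥0)
    (δ : ℝ≥0) (h : luglu G v v') : luglu G (shift v δ) (shift v' δ) := by
  rw [aux_luglu] at h ⊢
  obtain ⟨h1, h2, h3⟩ := h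
  have hδ := δ.coe_nonneg
  refine ⟨?_, ?_, ?_⟩
  · intro x n o hm hv
    have := h1 x n o hm (lt_of_add_lt_add_right hv)
    simp only [shift, NNReal.coe_add]
    linarith
  · intro x n o hm hv
    have := h2 x n o hm (lt_of_add_lt_add_right hv)
    simp only [shift, NNReal.coe_add]
    linarith
  · intro x y o d hm hs
    simp only [shift, NNReal.coe_add, add_sub_add_right_eq_sub] at hs ⊢
    exact h3 x y o d hm hs

theorem stmt6 {Q X : Type} [Fintype Q] [Fintype X] [DecidableEq X] (A : TA Q X)
    (G : Q → Set (Constr X)) (hfix : GuardEq A G)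
    (hleast : ∀ G' : Q → Set (Constr X), GuardEq A G' → ∀ q, G q ⊆ G' q)
    (hfin : ∀ q, (G q).Finite) :
    IsSimulation A (fun c c' => c.1 = c'.1 ∧ luglu (hfin c.1).toFinset c.2 c'.2) := by
  refine ⟨?_, ?_, ?_⟩
  · rintro ⟨q, v⟩
    refine ⟨rfl, ?_⟩
    rw [aux_luglu]
    exact ⟨fun x c o _ hv => absurd hv (lt_irrefl _), fun x c o _ hv => absurd hv (lt_irrefl _),
      fun x y o d _ hs => hs⟩
  · rintro ⟨q, a⟩ ⟨q', b⟩ ⟨q'', c⟩ ⟨h1, h2⟩ ⟨h3, h4⟩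
    dsimp only at h1 h2 h3 h4
    subst h1
    subst h3
    exact ⟨rfl, aux_trans _ _ _ _ h2 h4⟩
  · rintro q v q' v' ⟨h1, h2⟩
    dsimp only at h1 h2
    subst h1
    refine ⟨rfl, fun δ => ⟨δ, rfl, aux_shift _ _ _ δ h2⟩, ?_⟩
    rintro t ⟨q₁, v₁⟩ ⟨ht, hsrc, hg, htgt, hv₁⟩
    dsimp only at hsrc hg htgt hv₁
    subst htgt
    subst hv₁
    have hsub : ((TTrans.grd t : Set (Constr X)) ∪
        wpResetSet (TTrans.rst t) (G (TTrans.tgt t))) ⊆ G q := by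
      rw [hfix q]
      intro φ hφ
      simp only [Set.mem_iUnion]
      exact ⟨t, ht, hsrc, hφ⟩
    refine ⟨reset (TTrans.rst t) v', ⟨ht, hsrc, ?_, rfl, rfl⟩, rfl, ?_⟩
    · intro φ hφ
      exact aux_sat _ v v' h2 φ ((hfin q).mem_toFinset.2 (hsub (Or.inl hφ))) (hg φ hφ)
    · refine aux_reset (hfin q).toFinset _ _ ?_ v v' h2
      simp only [Set.Finite.coe_toFinset]
      exact fun φ hφ => hsub (Or.inr hφ)
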